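/- Let ℓ be an odd positive integer. Then ∫_ℝ cosh(x)^{−ℓ} dx = (−1)^{(ℓ−1)/2} · 2^{ℓ−1} π · B_{ℓ−1}^{(ℓ)}(ℓ/2) / (ℓ−1)!. Equivalently, B_{ℓ−1}^{(ℓ)}(ℓ/2) = −2^{2−ℓ} (ℓ−1)! · (i^{−ℓ}/(2πi)) ∫_ℝ cosh(x)^{−ℓ} dx. -/

import Mathlib

/-!
Both sides satisfy the same two-step recursion in `ℓ` and agree at `ℓ = 1`.

On the real side, `(sinh / cosh ^ (ℓ + 1))' = (ℓ + 1) / cosh ^ (ℓ + 2) - ℓ / cosh ^ ℓ`, and the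
primitive vanishes at `±∞`, so `(ℓ + 1) I_{ℓ+2} = ℓ I_ℓ` (`integral_cosh_rec`); moreover `I_1 = π`
because `arctan ∘ sinh` is a primitive of `1 / cosh`.

On the Bernoulli side, at `x = ℓ/2` the generating function is `(w / s(w)) ^ ℓ` with
`s(w) = 2 sinh (w/2)`. Cauchy's formula then turns `B_{ℓ-1}^{(ℓ)}(ℓ/2) / (ℓ-1)!` into
`(2πi)⁻¹ ∮ s ^ (-ℓ)` over a small circle (`circleIntegral_eq_genBernoulli`). Since
`(s ^ (-ℓ))'' = ℓ (ℓ + 1) s ^ (-ℓ-2) + (ℓ² / 4) s ^ (-ℓ)` is a derivative, its integral over the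
circle is zero, which gives `4 (ℓ + 1) J_{ℓ+2} = -ℓ J_ℓ` (`circleIntegral_rec`). The factor
`(-1) ^ ((ℓ-1)/2) 2 ^ (ℓ-1)` absorbs the difference between the two recursions.
-/

open Complex Real Filter Topology

/-- The generating function `w ↦ (w/(e^w-1))^r e^{xw}` of the Bernoulli polynomials of
order `r`, with the removable singularity at `w = 0` filled in by its value `1`. -/
noncomputable def bernGen (r : ℕ) (x : ℂ) (w : ℂ) : ℂ :=
  if w = 0 then 1 else (w / (Complex.exp w - 1)) ^ r * Complex.exp (x * w)

/-- The Bernoulli polynomial of order `r`, `B_n^{(r)}(x)`: `n!` times the `n`-th Taylor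
coefficient of `w ↦ (w/(e^w-1))^r e^{xw}` at `w = 0`. -/
noncomputable def genBernoulli (n r : ℕ) (x : ℂ) : ℂ :=
  (Nat.factorial n : ℂ) * (iteratedDeriv n (bernGen r x) 0 / (Nat.factorial n : ℂ))

open MeasureTheory Metric

/-! ### The integrals of powers of the hyperbolic secant -/

lemma one_add_sq_div_two_le_cosh (x : ℝ) : 1 + x ^ 2 / 2 ≤ Real.cosh x := by
  have h1 : Real.cosh x = 1 + 2 * Real.sinh (x / 2) ^ 2 := by
    have h := Real.cosh_two_mul (x / 2)
    have h' := Real.cosh_sq (x / 2)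
    rw [show 2 * (x / 2) = x by ring] at h
    linarith
  have h2 : (x / 2) ^ 2 ≤ Real.sinh (x / 2) ^ 2 := by
    rcases le_total 0 (x / 2) with h | h
    · have := Real.self_le_sinh_iff.2 h
      nlinarith
    · have := Real.sinh_le_self_iff.2 h
      nlinarith
  nlinarith

lemma inv_cosh_pow_le (ℓ : ℕ) (hℓ : 0 < ℓ) (x : ℝ) :
    ((Real.cosh x) ^ ℓ)⁻¹ ≤ 2 * (1 + x ^ 2)⁻¹ := by
  have h1 : (1 + x ^ 2) / 2 ≤ Real.cosh x ^ ℓ :=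
    calc (1 + x ^ 2) / 2 ≤ Real.cosh x := by linarith [one_add_sq_div_two_le_cosh x]
      _ ≤ Real.cosh x ^ ℓ := le_self_pow₀ (Real.one_le_cosh x) hℓ.ne'
  calc ((Real.cosh x) ^ ℓ)⁻¹ ≤ ((1 + x ^ 2) / 2)⁻¹ := inv_anti₀ (by positivity) h1
    _ = 2 * (1 + x ^ 2)⁻¹ := by rw [inv_div]; ring

lemma integrable_inv_cosh_pow (ℓ : ℕ) (hℓ : 0 < ℓ) :
    Integrable (fun x : ℝ => ((Real.cosh x) ^ ℓ)⁻¹) := by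
  refine (integrable_inv_one_add_sq.const_mul 2).mono' ?_ (ae_of_all _ fun x => ?_)
  · exact (by fun_prop : Measurable fun x : ℝ => ((Real.cosh x) ^ ℓ)⁻¹).aestronglyMeasurable
  · have := Real.cosh_pos x
    rw [Real.norm_of_nonneg (by positivity)]
    exact inv_cosh_pow_le ℓ hℓ x

lemma integral_inv_cosh : ∫ x : ℝ, ((Real.cosh x) ^ 1)⁻¹ = π := by
  have hd : ∀ x : ℝ, HasDerivAt (fun y => Real.arctan (Real.sinh y)) ((Real.cosh x) ^ 1)⁻¹ x := by
    intro x
    have h := (Real.hasDerivAt_sinh x).arctan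
    convert h using 1
    have := (Real.cosh_pos x).ne'
    rw [← Real.cosh_sq']
    field_simp
  have h := integral_of_hasDerivAt_of_tendsto hd (integrable_inv_cosh_pow 1 one_pos)
    ((tendsto_nhds_of_tendsto_nhdsWithin Real.tendsto_arctan_atBot).comp
      Real.sinhOrderIso.tendsto_atBot)
    ((tendsto_nhds_of_tendsto_nhdsWithin Real.tendsto_arctan_atTop).comp
      Real.sinhOrderIso.tendsto_atTop)
  rw [h]
  ring

lemma integral_cosh_rec (ℓ : ℕ) (hℓ : 0 < ℓ) :
    ((ℓ : ℝ) + 1) * ∫ x : ℝ, ((Real.cosh x) ^ (ℓ + 2))⁻¹ =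
      ℓ * ∫ x : ℝ, ((Real.cosh x) ^ ℓ)⁻¹ := by
  have hi := integrable_inv_cosh_pow ℓ hℓ
  have hi2 := integrable_inv_cosh_pow (ℓ + 2) (by omega)
  have hd : ∀ x : ℝ, HasDerivAt (fun y => Real.sinh y * ((Real.cosh y) ^ (ℓ + 1))⁻¹)
      (((ℓ : ℝ) + 1) * ((Real.cosh x) ^ (ℓ + 2))⁻¹ - ℓ * ((Real.cosh x) ^ ℓ)⁻¹) x := by
    intro x
    have hc := (Real.cosh_pos x).ne'
    have h := (Real.hasDerivAt_sinh x).mul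
      (((Real.hasDerivAt_cosh x).pow (ℓ + 1)).inv (pow_ne_zero _ hc))
    refine h.congr_deriv ?_
    have hs := Real.sinh_sq x
    simp only [Pi.pow_apply, Pi.inv_apply, Nat.add_sub_cancel]
    push_cast
    field_simp
    linear_combination (-(ℓ : ℝ) - 1) * Real.cosh x ^ (3 * ℓ + 2) * hs
  -- The primitive is dominated by `1 / cosh ^ ℓ`, because `|sinh| ≤ cosh`.
  have hb : ∀ x : ℝ, ‖Real.sinh x * ((Real.cosh x) ^ (ℓ + 1))⁻¹‖ ≤ ((Real.cosh x) ^ ℓ)⁻¹ := by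
    intro x
    have hc := Real.cosh_pos x
    have hs : |Real.sinh x| ≤ Real.cosh x :=
      abs_le_of_sq_le_sq (by rw [Real.sinh_sq]; linarith) hc.le
    rw [norm_mul, Real.norm_eq_abs, Real.norm_of_nonneg (by positivity)]
    calc |Real.sinh x| * ((Real.cosh x) ^ (ℓ + 1))⁻¹
        ≤ Real.cosh x * ((Real.cosh x) ^ (ℓ + 1))⁻¹ := by gcongr
      _ = ((Real.cosh x) ^ ℓ)⁻¹ := by rw [pow_succ]; field_simp
  have hint : Integrable (fun x : ℝ => Real.sinh x * ((Real.cosh x) ^ (ℓ + 1))⁻¹) := by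
    refine hi.mono' ?_ (ae_of_all _ hb)
    exact (by fun_prop : Measurable
      fun x : ℝ => Real.sinh x * ((Real.cosh x) ^ (ℓ + 1))⁻¹).aestronglyMeasurable
  have h := integral_eq_zero_of_hasDerivAt_of_integrable hd
    ((hi2.const_mul _).sub (hi.const_mul _)) hint
  rw [integral_sub (hi2.const_mul _) (hi.const_mul _), integral_const_mul,
    integral_const_mul] at h
  linarith

/-! ### Bernoulli polynomials as contour integrals -/

lemma exp_sub_one_ne_zero {w : ℂ} (h0 : w ≠ 0) (hw : ‖w‖ < 1) : Complex.exp w - 1 ≠ 0 := by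
  intro h
  have h1 := Complex.norm_exp_sub_one_sub_id_le hw.le
  rw [h, zero_sub, norm_neg] at h1
  have h2 : 0 < ‖w‖ := norm_pos_iff.2 h0
  nlinarith

lemma two_mul_sinh_half (w : ℂ) :
    2 * Complex.sinh (w / 2) = Complex.exp (-(w / 2)) * (Complex.exp w - 1) := by
  rw [Complex.two_sinh, mul_sub, ← Complex.exp_add, mul_one]
  congr 2
  ring

lemma two_mul_sinh_half_ne_zero {w : ℂ} (hw : w ∈ sphere (0 : ℂ) (1 / 2)) :
    2 * Complex.sinh (w / 2) ≠ 0 := by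
  have hn : ‖w‖ = 1 / 2 := by simpa using hw
  rw [two_mul_sinh_half]
  refine mul_ne_zero (Complex.exp_ne_zero _) (exp_sub_one_ne_zero ?_ (by rw [hn]; norm_num))
  rintro rfl
  norm_num at hn

/-- The singularity of the generating function at `0` is removable: there `(e^w - 1)/w` is the
divided slope of `exp` at `0`, which is holomorphic and does not vanish on the disc. -/
lemma differentiableOn_bernGen (r : ℕ) (x : ℂ) :
    DifferentiableOn ℂ (bernGen r x) (closedBall 0 (1 / 2)) := by
  have hE : ∀ w : ℂ, w ≠ 0 → dslope Complex.exp 0 w = (Complex.exp w - 1) / w := by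
    intro w hw
    rw [dslope_of_ne _ hw, slope_def_field, Complex.exp_zero, sub_zero]
  have hE0 : dslope Complex.exp 0 0 = 1 := by
    rw [dslope_same, Complex.deriv_exp, Complex.exp_zero]
  have heq : bernGen r x =
      fun w => ((dslope Complex.exp 0 w)⁻¹) ^ r * Complex.exp (x * w) := by
    funext w
    unfold bernGen
    split_ifs with h
    · subst h
      simp
    · rw [hE w h, inv_div]
  rw [heq]
  have hd : DifferentiableOn ℂ (dslope Complex.exp 0) (closedBall 0 (1 / 2)) :=
    (Complex.differentiableOn_dslope (closedBall_mem_nhds _ (by norm_num))).2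
      Complex.differentiable_exp.differentiableOn
  refine ((hd.inv fun w hw => ?_).pow r).mul (by fun_prop)
  by_cases h : w = 0
  · rw [h, hE0]
    exact one_ne_zero
  · have hn : ‖w‖ ≤ 1 / 2 := by simpa using hw
    rw [hE w h]
    exact div_ne_zero (exp_sub_one_ne_zero h (by linarith)) h

/-- The contour integral of `(2 sinh (w/2)) ^ (-ℓ)` over the circle `|w| = 1/2`. -/
noncomputable def sinhContour (ℓ : ℕ) : ℂ :=
  ∮ w in C(0, 1 / 2), ((2 * Complex.sinh (w / 2)) ^ ℓ)⁻¹

/-- Cauchy's formula for the Taylor coefficients of `(w / (2 sinh (w/2))) ^ ℓ`, with `ℓ = n + 1`. -/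
lemma circleIntegral_eq_genBernoulli (n : ℕ) :
    sinhContour (n + 1) =
      (2 * π * I / n.factorial) * genBernoulli n (n + 1) (((n + 1 : ℕ) : ℂ) / 2) := by
  have hf : (n.factorial : ℂ) ≠ 0 := mod_cast n.factorial_ne_zero
  have h := (differentiableOn_bernGen (n + 1)
    (((n + 1 : ℕ) : ℂ) / 2)).circleIntegral_one_div_sub_center_pow_smul (by norm_num) n
  rw [genBernoulli, mul_div_cancel₀ _ hf, ← smul_eq_mul, ← h]
  refine circleIntegral.integral_congr (by norm_num) fun w hw => ?_
  have hn : ‖w‖ = 1 / 2 := by simpa using hw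
  have h0 : w ≠ 0 := by
    rintro rfl
    norm_num at hn
  have h1 := exp_sub_one_ne_zero h0 (by rw [hn]; norm_num)
  have h2 : Complex.exp (((n + 1 : ℕ) : ℂ) / 2 * w) = Complex.exp (w / 2) ^ (n + 1) := by
    rw [← Complex.exp_nat_mul]
    congr 1
    ring
  simp only [bernGen, if_neg h0, sub_zero, smul_eq_mul]
  rw [h2, two_mul_sinh_half, Complex.exp_neg, ← inv_pow, ← one_div_pow, ← mul_pow, ← mul_pow]
  congr 1
  have := Complex.exp_ne_zero (w / 2)
  field_simp

lemma circleIntegrable_inv_sinh_pow (ℓ : ℕ) :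
    CircleIntegrable (fun w : ℂ => ((2 * Complex.sinh (w / 2)) ^ ℓ)⁻¹) 0 (1 / 2) := by
  refine ContinuousOn.circleIntegrable (by norm_num) ?_
  refine ContinuousOn.inv₀ ?_ fun w hw => pow_ne_zero _ (two_mul_sinh_half_ne_zero hw)
  exact (by fun_prop : Continuous fun w : ℂ => (2 * Complex.sinh (w / 2)) ^ ℓ).continuousOn

/-- With `s(w) = 2 sinh (w/2)`, the function `(ℓ + 1) s ^ (-ℓ-2) + (ℓ / 4) s ^ (-ℓ)` has the
primitive `-cosh (w/2) s ^ (-ℓ-1)` on the circle, so its contour integral vanishes. -/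
lemma circleIntegral_rec (ℓ : ℕ) :
    4 * ((ℓ : ℂ) + 1) * sinhContour (ℓ + 2) = -ℓ * sinhContour ℓ := by
  have hd : ∀ w ∈ sphere (0 : ℂ) (1 / 2), HasDerivWithinAt
      (fun w : ℂ => -Complex.cosh (w / 2) * ((2 * Complex.sinh (w / 2)) ^ (ℓ + 1))⁻¹)
      (((ℓ : ℂ) + 1) * ((2 * Complex.sinh (w / 2)) ^ (ℓ + 2))⁻¹ +
        (ℓ : ℂ) / 4 * ((2 * Complex.sinh (w / 2)) ^ ℓ)⁻¹) (sphere 0 (1 / 2)) w := by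
    intro w hw
    have hs := two_mul_sinh_half_ne_zero hw
    have hl : HasDerivAt (fun w : ℂ => w / 2) (1 / 2) w := (hasDerivAt_id w).div_const 2
    have h := (hl.ccosh.neg).mul ((((hl.csinh).const_mul 2).pow (ℓ + 1)).inv (pow_ne_zero _ hs))
    refine (h.congr_deriv ?_).hasDerivWithinAt
    have hc := Complex.cosh_sq (w / 2)
    simp only [Pi.pow_apply, Pi.inv_apply, Pi.neg_apply, Nat.add_sub_cancel]
    push_cast
    generalize Complex.cosh (w / 2) = C at *
    obtain ⟨T, hT⟩ : ∃ T, T = 2 * Complex.sinh (w / 2) := ⟨_, rfl⟩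
    have hS : Complex.sinh (w / 2) = T / 2 := by rw [hT]; ring
    rw [← hT] at hs
    rw [hS] at hc
    rw [← hT, hS]
    field_simp
    linear_combination 16 * ((ℓ : ℂ) + 1) * T ^ (3 * ℓ + 2) * hc
  have h := circleIntegral.integral_eq_zero_of_hasDerivWithinAt (by norm_num) hd
  have hi := circleIntegrable_inv_sinh_pow ℓ
  have hi2 := circleIntegrable_inv_sinh_pow (ℓ + 2)
  simp only [← smul_eq_mul (a := (ℓ : ℂ) + 1), ← smul_eq_mul (a := (ℓ : ℂ) / 4)] at h
  rw [circleIntegral.integral_add (hi2.const_fun_smul (a := (ℓ : ℂ) + 1))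
      (hi.const_fun_smul (a := (ℓ : ℂ) / 4)),
    circleIntegral.integral_smul, circleIntegral.integral_smul, smul_eq_mul, smul_eq_mul] at h
  unfold sinhContour
  linear_combination 4 * h

lemma sinhContour_one : sinhContour 1 = 2 * π * I := by
  rw [circleIntegral_eq_genBernoulli 0]
  simp [genBernoulli, bernGen]

/-! ### Comparison of the two recursions -/

lemma integral_cosh_eq_sinhContour (k : ℕ) :
    2 * I * ((∫ x : ℝ, ((Real.cosh x) ^ (2 * k + 1))⁻¹ : ℝ) : ℂ) =
      (-1) ^ k * 2 ^ (2 * k) * sinhContour (2 * k + 1) := by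
  induction k with
  | zero =>
    rw [Nat.mul_zero, Nat.zero_add, integral_inv_cosh, sinhContour_one]
    ring
  | succ k ih =>
    have h1 := congrArg (fun t : ℝ => (t : ℂ)) (integral_cosh_rec (2 * k + 1) (by omega))
    have h2 := circleIntegral_rec (2 * k + 1)
    rw [show 2 * (k + 1) + 1 = 2 * k + 1 + 2 by ring]
    push_cast at h1 h2 ⊢
    have hk : (2 * (k : ℂ) + 1 + 1) ≠ 0 := by exact_mod_cast (2 * k + 1).succ_ne_zero
    refine mul_left_cancel₀ hk ?_
    rw [show 2 * (k + 1) = 2 * k + 2 by ring, pow_add, pow_succ]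
    linear_combination 2 * I * h1 + (2 * k + 1) * ih + (-1) ^ k * 2 ^ (2 * k) * h2

/-- For odd `ℓ`, `∫_ℝ cosh(x)^{-ℓ} dx = (-1)^{(ℓ-1)/2} 2^{ℓ-1} π B_{ℓ-1}^{(ℓ)}(ℓ/2)/(ℓ-1)!`;
equivalently, `B_{ℓ-1}^{(ℓ)}(ℓ/2) = -2^{2-ℓ}(ℓ-1)!·(i^{-ℓ}/(2πi))∫_ℝ cosh(x)^{-ℓ} dx`
(the integral representation from the first proof of Proposition A.1 of the paper). -/
theorem stmt19 (ℓ : ℕ) (hodd : Odd ℓ) (hpos : 0 < ℓ) :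
    ((∫ x : ℝ, ((Real.cosh x) ^ ℓ)⁻¹ : ℝ) : ℂ) =
      (-1 : ℂ) ^ ((ℓ - 1) / 2) * 2 ^ (ℓ - 1) * ↑π * genBernoulli (ℓ - 1) ℓ ((ℓ : ℂ) / 2) /
        (Nat.factorial (ℓ - 1) : ℂ) ∧
    genBernoulli (ℓ - 1) ℓ ((ℓ : ℂ) / 2) =
      -(2 : ℂ) ^ ((2 : ℤ) - ℓ) * (Nat.factorial (ℓ - 1) : ℂ) *
        (I ^ (-(ℓ : ℤ)) / (2 * ↑π * I)) * ((∫ x : ℝ, ((Real.cosh x) ^ ℓ)⁻¹ : ℝ) : ℂ) := by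
  obtain ⟨k, rfl⟩ := hodd
  have hJ := circleIntegral_eq_genBernoulli (2 * k)
  have hC := integral_cosh_eq_sinhContour k
  rw [hJ] at hC
  have hf : ((2 * k).factorial : ℂ) ≠ 0 := mod_cast (2 * k).factorial_ne_zero
  have hπ : (π : ℂ) ≠ 0 := mod_cast Real.pi_ne_zero
  have hmain : ((∫ x : ℝ, ((Real.cosh x) ^ (2 * k + 1))⁻¹ : ℝ) : ℂ) =
      (-1) ^ k * 2 ^ (2 * k) * π * genBernoulli (2 * k) (2 * k + 1) (((2 * k + 1 : ℕ) : ℂ) / 2) /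
        ((2 * k).factorial : ℂ) := by
    refine mul_left_cancel₀ (mul_ne_zero two_ne_zero I_ne_zero) (hC.trans ?_)
    ring
  rw [Nat.add_sub_cancel, Nat.mul_div_cancel_left k two_pos]
  refine ⟨hmain, ?_⟩
  rw [hmain]
  have hI : I ^ (-((2 * k + 1 : ℕ) : ℤ)) = -((-1) ^ k * I) := by
    rw [zpow_neg, zpow_natCast, pow_succ, pow_mul, I_sq, mul_inv, inv_I, ← inv_pow]
    norm_num
  have h2 : (2 : ℂ) ^ ((2 : ℤ) - ((2 * k + 1 : ℕ) : ℤ)) = 2 / 2 ^ (2 * k) := by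
    rw [zpow_sub₀ two_ne_zero, zpow_natCast, pow_succ]
    field_simp
  have hsign : ((-1 : ℂ) ^ k) * (-1) ^ k = 1 := by
    rw [← mul_pow]
    norm_num
  rw [hI, h2]
  field_simp
  linear_combination -(genBernoulli (2 * k) (2 * k + 1) (((2 * k + 1 : ℕ) : ℂ) / 2)) * hsign
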